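/- Let m ≥ 2 and let v = 2(b₁,…,b_m) ∈ D_m be a vector such that at least two of the b_i are nonzero, b₁+⋯+b_m is odd, and gcd(b₁,…,b_m) = 1. Let M := {x ∈ D_m : (x,v) = 0}, a lattice of rank m−1 with the form induced from the Euclidean form on ℤᵐ. Then the pullback θ_{D_m}|_{v^⊥}, i.e. the restriction of the theta-product θ_{D_m}(τ,z₁,…,z_m) = θ(τ,z₁)⋯θ(τ,z_m) to the hyperplane {𝔷 ∈ ℂᵐ : b₁z₁+⋯+b_mz_m = 0} = M⊗ℂ, is not identically zero and is a holomorphic Jacobi cusp form of weight m/2 and index 1 for M with multiplier system v_η^{3m}, whose order is Ord(θ_{D_m}|_{v^⊥}) = 1/(v,v) = 1/(4(b₁²+⋯+b_m²)) > 0. -/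

import Mathlib

open Complex Matrix
open scoped Real BigOperators Classical

noncomputable section

abbrev SL2Z := Matrix.SpecialLinearGroup (Fin 2) ℤ

/-- The integral bilinear form attached to a Gram matrix `S`. -/
def bilinZ {ι : Type*} [Fintype ι] (S : Matrix ι ι ℤ) (x y : ι → ℤ) : ℤ :=
  ∑ i, ∑ j, x i * S i j * y j

def bilinQ {ι : Type*} [Fintype ι] (S : Matrix ι ι ℤ) (x y : ι → ℚ) : ℚ :=
  ∑ i, ∑ j, x i * (S i j : ℚ) * y j

def bilinR {ι : Type*} [Fintype ι] (S : Matrix ι ι ℤ) (x y : ι → ℝ) : ℝ :=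
  ∑ i, ∑ j, x i * (S i j : ℝ) * y j

def bilinC {ι : Type*} [Fintype ι] (S : Matrix ι ι ℤ) (x y : ι → ℂ) : ℂ :=
  ∑ i, ∑ j, x i * (S i j : ℂ) * y j

/-- `S` is the Gram matrix of an even positive definite lattice. -/
structure IsEvenPosDef {ι : Type*} [Fintype ι] (S : Matrix ι ι ℤ) : Prop where
  symm : S.IsSymm
  posdef : ∀ x : ι → ℚ, x ≠ 0 → 0 < bilinQ S x x
  even_diag : ∀ i, (2 : ℤ) ∣ S i i

/-- `l ∈ (1/2) L^∨`, written in lattice coordinates:  `2(l,x) ∈ ℤ` for every lattice vector. -/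
def InHalfDual {ι : Type*} [Fintype ι] (S : Matrix ι ι ℤ) (l : ι → ℚ) : Prop :=
  ∀ x : ι → ℤ, ∃ m : ℤ, 2 * bilinQ S l (fun i => (x i : ℚ)) = m

/-- `φ` is a holomorphic Jacobi form of weight `k` and index `t` for the lattice `(ℤ^ι, S)`
with `SL₂(ℤ)`-character (multiplier system) `χ`, Heisenberg character `ν`,
and Fourier coefficients `f`. -/
structure IsJacobiForm {ι : Type*} [Fintype ι] (S : Matrix ι ι ℤ) (k t : ℚ)
    (χ : SL2Z → ℂ) (ν : (ι → ℤ) → (ι → ℤ) → ℂ)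
    (f : ℚ × (ι → ℚ) → ℂ) (φ : ℂ → (ι → ℂ) → ℂ) : Prop where
  holo : DifferentiableOn ℂ (fun p : ℂ × (ι → ℂ) => φ p.1 p.2) {p | 0 < p.1.im}
  modular : ∀ A : SL2Z, ∀ τ : ℂ, 0 < τ.im → ∀ z : ι → ℂ,
    φ (((A.1 0 0 : ℂ) * τ + (A.1 0 1 : ℂ)) / ((A.1 1 0 : ℂ) * τ + (A.1 1 1 : ℂ)))
        (fun i => z i / ((A.1 1 0 : ℂ) * τ + (A.1 1 1 : ℂ)))
      = χ A * ((A.1 1 0 : ℂ) * τ + (A.1 1 1 : ℂ)) ^ (k : ℂ)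
        * Complex.exp ((π : ℂ) * I * (t : ℂ) * (A.1 1 0 : ℂ) * bilinC S z z
            / ((A.1 1 0 : ℂ) * τ + (A.1 1 1 : ℂ)))
        * φ τ z
  elliptic : ∀ x y : ι → ℤ, ∀ τ : ℂ, 0 < τ.im → ∀ z : ι → ℂ,
    φ τ (fun i => z i + (x i : ℂ) * τ + (y i : ℂ))
      = ν x y * Complex.exp (-((π : ℂ) * I * (t : ℂ))
            * ((bilinZ S x x : ℂ) * τ + 2 * bilinC S (fun i => (x i : ℂ)) z))
        * φ τ z
  support : ∀ p : ℚ × (ι → ℚ), f p ≠ 0 →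
    0 ≤ p.1 ∧ InHalfDual S p.2 ∧ 0 ≤ 2 * p.1 * t - bilinQ S p.2 p.2
  expansion : ∀ τ : ℂ, 0 < τ.im → ∀ z : ι → ℂ,
    HasSum (fun p : ℚ × (ι → ℚ) =>
        f p * Complex.exp (2 * (π : ℂ) * I *
          ((p.1 : ℂ) * τ + bilinC S (fun i => (p.2 i : ℂ)) z))) (φ τ z)

/-- The Fourier coefficients `f` are supported on indices of positive hyperbolic norm
(cusp form condition). -/
def IsCuspSupport {ι : Type*} [Fintype ι] (S : Matrix ι ι ℤ) (t : ℚ)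
    (f : ℚ × (ι → ℚ) → ℂ) : Prop :=
  ∀ p : ℚ × (ι → ℚ), f p ≠ 0 → 0 < 2 * p.1 * t - bilinQ S p.2 p.2

/-- `c` is a root of unity. -/
def HasFiniteOrder (c : ℂ) : Prop := ∃ N : ℕ, 0 < N ∧ c ^ N = 1

/-- The quadratic character mod 4. -/
def chi4 (n : ℤ) : ℂ := if n % 4 = 1 then 1 else if n % 4 = 3 then -1 else 0

/-- The classical Jacobi theta-series of characteristic `(1/2,1/2)`. -/
def jtheta (τ z : ℂ) : ℂ :=
  ∑' n : ℤ, chi4 n *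
    Complex.exp (2 * (π : ℂ) * I * (((n : ℂ) ^ 2 * τ) / 8 + (n : ℂ) * z / 2))

/-- The Dedekind eta function. -/
def dedekindEta (τ : ℂ) : ℂ :=
  Complex.exp ((π : ℂ) * I * τ / 12) *
    ∏' n : ℕ, (1 - Complex.exp (2 * (π : ℂ) * I * ((n : ℂ) + 1) * τ))

/-!
Multiplying out the theta series, the theta product is a sum over `k ∈ (2ℤ + 1)ᵐ` with exponents
`(k²/8, k/2)`. Restriction to the hyperplane `b^⊥` replaces `k/2` by its orthogonal projection `l`,
so the hyperbolic norm `2n - (l, l)` becomes the squared length of the component of `k/2` along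
`b`, namely `(k, b)² / (4 (b, b))`. As `(k, b) ≡ ∑ bᵢ` is odd, this is at least `1 / (4 (b, b))`.
Coprimality of the `bᵢ` provides an odd `k` with `(k, b) = 1`, and no other odd vector has the same
projection and length, so its term cannot be cancelled.

The transformation laws need only those of a single theta function. For the modular one, `θ/η³` is
invariant under the generators `S` and `T` of `SL₂(ℤ)`, acting in weight `-1` and index `1/2`.
-/

lemma prod_zpow_eq_zpow_sum₀ {κ G : Type*} [CommGroupWithZero G] {a : G} (ha : a ≠ 0)
    (s : Finset κ) (f : κ → ℤ) : ∏ i ∈ s, a ^ f i = a ^ ∑ i ∈ s, f i := by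
  induction s using Finset.cons_induction with
  | empty => simp
  | cons i s hi ih => rw [Finset.prod_cons, Finset.sum_cons, ih, zpow_add₀ ha]

section Analysis

lemma hasSum_prod_pi_fin {α : Type*} {n : ℕ} {f : Fin n → α → ℂ} {a : Fin n → ℂ}
    (hf : ∀ i, HasSum (f i) (a i)) :
    HasSum (fun k : Fin n → α => ∏ i, f i (k i)) (∏ i, a i) := by
  induction n with
  | zero => simp
  | succ n ih =>
    have htail := ih fun i => hf i.succ
    have hsummable : Summable fun p : α × (Fin n → α) =>
        f 0 p.1 * ∏ i : Fin n, f i.succ (p.2 i) :=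
      summable_mul_of_summable_norm (g := fun k : Fin n → α => ∏ i : Fin n, f i.succ (k i))
        (hf 0).summable.norm htail.summable.norm
    rw [← (Fin.consEquiv fun _ => α).hasSum_iff, Fin.prod_univ_succ]
    simpa [Function.comp_def, Fin.prod_univ_succ, Fin.consEquiv] using
      (hf 0).mul (g := fun k : Fin n → α => ∏ i : Fin n, f i.succ (k i)) htail hsummable

lemma hasSum_prod_pi {κ α : Type*} [Fintype κ] {f : κ → α → ℂ} {a : κ → ℂ}
    (hf : ∀ i, HasSum (f i) (a i)) :
    HasSum (fun k : κ → α => ∏ i, f i (k i)) (∏ i, a i) := by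
  let e := (Fintype.equivFin κ).symm
  rw [← (e.arrowCongr (Equiv.refl α)).hasSum_iff, ← e.prod_comp a]
  simpa [Function.comp_def, ← e.prod_comp] using hasSum_prod_pi_fin fun i => hf (e i)

lemma eventually_ne_zero_of_differentiable {f : ℂ → ℂ} (hf : Differentiable ℂ f) {z : ℂ}
    (hz : f z ≠ 0) (x : ℂ) : ∀ᶠ t in nhdsWithin x {x}ᶜ, f t ≠ 0 := by
  have hanalytic : AnalyticOnNhd ℂ f Set.univ := hf.differentiableOn.analyticOnNhd isOpen_univ
  by_contra h
  have hfreq : ∃ᶠ t in nhdsWithin x {x}ᶜ, f t = 0 := by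
    simpa only [Filter.not_eventually, not_not] using h
  exact hz (hanalytic.eqOn_zero_of_preconnected_of_frequently_eq_zero isPreconnected_univ
    (Set.mem_univ x) hfreq (Set.mem_univ z))

lemma exists_forall_apply_mul_ne_zero {κ : Type*} [Finite κ] {f : ℂ → ℂ} (hf : Differentiable ℂ f)
    {z : ℂ} (hz : f z ≠ 0) {c : κ → ℂ} (hc : ∀ i, c i ≠ 0) : ∃ t, ∀ i, f (t * c i) ≠ 0 := by
  have hne (i : κ) : ∀ᶠ t in nhdsWithin (0 : ℂ) {0}ᶜ, f (t * c i) ≠ 0 :=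
    eventually_ne_zero_of_differentiable (f := fun t => f (t * c i)) (by fun_prop) (z := z / c i)
      (by simpa only [div_mul_cancel₀ _ (hc i)] using hz) 0
  exact (Filter.eventually_all.2 hne).exists

end Analysis

section JacobiTheta

lemma chi4_two_mul_add_one (k : ℤ) : chi4 (2 * k + 1) = (-1) ^ k := by
  rcases Int.even_or_odd k with hk | hk
  · rw [hk.neg_one_zpow, chi4, if_pos (by grind)]
  · rw [hk.neg_one_zpow, chi4, if_neg (by grind), if_pos (by grind)]

lemma chi4_eq_zero_of_even {n : ℤ} (hn : Even n) : chi4 n = 0 := by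
  rw [chi4, if_neg (by grind), if_neg (by grind)]

lemma chi4_ne_zero_iff_odd {n : ℤ} : chi4 n ≠ 0 ↔ Odd n := by
  refine ⟨fun h => Int.not_even_iff_odd.1 fun hn => h (chi4_eq_zero_of_even hn), ?_⟩
  rintro ⟨k, rfl⟩
  rw [chi4_two_mul_add_one]
  exact zpow_ne_zero k (by norm_num)

lemma chi4_add_two_mul (n x : ℤ) : chi4 (n + 2 * x) = (-1) ^ x * chi4 n := by
  rcases Int.even_or_odd n with hn | ⟨k, rfl⟩
  · rw [chi4_eq_zero_of_even hn, chi4_eq_zero_of_even (hn.add (even_two_mul x)), mul_zero]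
  · rw [show 2 * k + 1 + 2 * x = 2 * (x + k) + 1 by ring, chi4_two_mul_add_one,
      chi4_two_mul_add_one, zpow_add₀ (by norm_num)]

/-- The `n`-th term of the series defining `jtheta τ z`. -/
def jthetaTerm (τ z : ℂ) (n : ℤ) : ℂ :=
  chi4 n * cexp (2 * (π : ℂ) * I * (((n : ℂ) ^ 2 * τ) / 8 + (n : ℂ) * z / 2))

lemma jthetaTerm_two_mul_add_one (τ z : ℂ) (k : ℤ) :
    jthetaTerm τ z (2 * k + 1) =
      cexp (π * I * (τ / 4 + z)) * jacobiTheta₂_term k (z + τ / 2 + 1 / 2) τ := by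
  rw [jthetaTerm, chi4_two_mul_add_one, jacobiTheta₂_term, ← Complex.exp_pi_mul_I,
    ← Complex.exp_int_mul, ← Complex.exp_add, ← Complex.exp_add]
  congr 1
  push_cast
  ring

lemma hasSum_jthetaTerm_jacobiTheta₂ {τ : ℂ} (hτ : 0 < τ.im) (z : ℂ) :
    HasSum (jthetaTerm τ z) (cexp (π * I * (τ / 4 + z)) * jacobiTheta₂ (z + τ / 2 + 1 / 2) τ) := by
  have hinj : Function.Injective fun k : ℤ => 2 * k + 1 := fun a b h => by simpa using h
  have hsupp : ∀ n ∉ Set.range fun k : ℤ => 2 * k + 1, jthetaTerm τ z n = 0 := fun n hn => by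
    have heven : Even n := Int.not_odd_iff_even.1 fun ⟨k, hk⟩ => hn ⟨k, hk.symm⟩
    rw [jthetaTerm, chi4_eq_zero_of_even heven, zero_mul]
  rw [← hinj.hasSum_iff hsupp]
  simpa only [Function.comp_def, jthetaTerm_two_mul_add_one] using
    (hasSum_jacobiTheta₂_term _ hτ).mul_left _

lemma jtheta_eq_jacobiTheta₂ {τ : ℂ} (hτ : 0 < τ.im) (z : ℂ) :
    jtheta τ z = cexp (π * I * (τ / 4 + z)) * jacobiTheta₂ (z + τ / 2 + 1 / 2) τ :=
  (hasSum_jthetaTerm_jacobiTheta₂ hτ z).tsum_eq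

lemma hasSum_jthetaTerm {τ : ℂ} (hτ : 0 < τ.im) (z : ℂ) :
    HasSum (jthetaTerm τ z) (jtheta τ z) :=
  jtheta_eq_jacobiTheta₂ hτ z ▸ hasSum_jthetaTerm_jacobiTheta₂ hτ z

lemma differentiableAt_jtheta {p : ℂ × ℂ} (hp : 0 < p.1.im) :
    DifferentiableAt ℂ (fun p : ℂ × ℂ => jtheta p.1 p.2) p := by
  have hθ : DifferentiableAt ℂ (fun p : ℂ × ℂ => jacobiTheta₂ (p.2 + p.1 / 2 + 1 / 2) p.1) p :=
    (hasFDerivAt_jacobiTheta₂ (p.2 + p.1 / 2 + 1 / 2) hp).differentiableAt.comp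
      (f := fun p : ℂ × ℂ => (p.2 + p.1 / 2 + 1 / 2, p.1)) p (by fun_prop)
  have hexp : DifferentiableAt ℂ (fun p : ℂ × ℂ => cexp (π * I * (p.1 / 4 + p.2))) p := by
    fun_prop
  refine (hexp.mul hθ).congr_of_eventuallyEq ?_
  have hmem : {p : ℂ × ℂ | 0 < p.1.im} ∈ nhds p :=
    (isOpen_lt continuous_const (Complex.continuous_im.comp continuous_fst)).mem_nhds hp
  filter_upwards [hmem] with q hq
  exact jtheta_eq_jacobiTheta₂ hq _

-- Shifting `n` by `2x` completes the square `n² + 4nx = (n + 2x)² - 4x²` in the exponent.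
lemma jthetaTerm_add_mul_add (τ z : ℂ) (x y n : ℤ) :
    jthetaTerm τ (z + x * τ + y) n =
      (-1) ^ (x + y) * cexp (-(π * I) * (x ^ 2 * τ + 2 * x * z)) * jthetaTerm τ z (n + 2 * x) := by
  rcases Int.even_or_odd n with hn | ⟨k, rfl⟩
  · simp only [jthetaTerm, chi4_add_two_mul, chi4_eq_zero_of_even hn, mul_zero, zero_mul]
  · have hsign : cexp (π * I * ((2 * k + 1) * y)) = (-1) ^ y := by
      rw [show (π * I * ((2 * k + 1) * y) : ℂ) = y * (π * I) + (k * y : ℤ) * (2 * π * I) by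
        push_cast; ring, Complex.exp_add, Complex.exp_int_mul_two_pi_mul_I, Complex.exp_int_mul,
        Complex.exp_pi_mul_I, mul_one]
    have hsq : ((-1 : ℂ) ^ x) * (-1) ^ x = 1 := by rw [← mul_zpow]; simp
    have hexp : cexp (2 * π * I * ((2 * k + 1) ^ 2 * τ / 8 + (2 * k + 1) * (z + x * τ) / 2)) =
        cexp (-(π * I) * (x ^ 2 * τ + 2 * x * z)) *
          cexp (2 * π * I * (((2 * k + 1 + 2 * x : ℤ) : ℂ) ^ 2 * τ / 8 +
            ((2 * k + 1 + 2 * x : ℤ) : ℂ) * z / 2)) := by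
      rw [← Complex.exp_add]; congr 1; push_cast; ring
    calc jthetaTerm τ (z + x * τ + y) (2 * k + 1)
        = chi4 (2 * k + 1) * (cexp (π * I * ((2 * k + 1) * y)) *
            cexp (2 * π * I * ((2 * k + 1) ^ 2 * τ / 8 + (2 * k + 1) * (z + x * τ) / 2))) := by
          rw [jthetaTerm, ← Complex.exp_add]; congr 2; push_cast; ring
      _ = (-1) ^ (x + y) * ((-1) ^ x * chi4 (2 * k + 1)) *
            cexp (2 * π * I * ((2 * k + 1) ^ 2 * τ / 8 + (2 * k + 1) * (z + x * τ) / 2)) := by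
          rw [hsign, zpow_add₀ (by norm_num)]
          linear_combination -(chi4 (2 * k + 1) * (-1) ^ y * cexp (2 * π * I *
            ((2 * k + 1) ^ 2 * τ / 8 + (2 * k + 1) * (z + x * τ) / 2))) * hsq
      _ = _ := by
          rw [jthetaTerm, chi4_add_two_mul, hexp]; ring

lemma jtheta_add_mul_add (τ z : ℂ) (x y : ℤ) :
    jtheta τ (z + x * τ + y) =
      (-1) ^ (x + y) * cexp (-(π * I) * (x ^ 2 * τ + 2 * x * z)) * jtheta τ z := by
  calc jtheta τ (z + x * τ + y) = ∑' n, jthetaTerm τ (z + x * τ + y) n := rfl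
    _ = (-1) ^ (x + y) * cexp (-(π * I) * (x ^ 2 * τ + 2 * x * z)) *
          ∑' n, jthetaTerm τ z (n + 2 * x) := by simp only [jthetaTerm_add_mul_add, tsum_mul_left]
    _ = _ := congrArg _ ((Equiv.addRight (2 * x)).tsum_eq (jthetaTerm τ z))

lemma jtheta_add_one_left (τ z : ℂ) : jtheta (τ + 1) z = cexp (π * I / 4) * jtheta τ z := by
  have hterm (n : ℤ) : jthetaTerm (τ + 1) z n = cexp (π * I / 4) * jthetaTerm τ z n := by
    rcases Int.even_or_odd n with hn | ⟨k, rfl⟩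
    · simp only [jthetaTerm, chi4_eq_zero_of_even hn, mul_zero, zero_mul]
    · obtain ⟨l, hl⟩ := Int.even_mul_succ_self k
      have hl' : (k : ℂ) * (k + 1) = l + l := mod_cast hl
      rw [jthetaTerm, jthetaTerm, mul_left_comm, ← Complex.exp_add]
      congr 1
      refine Complex.exp_eq_exp_iff_exists_int.2 ⟨l, ?_⟩
      push_cast
      linear_combination (π * I) * hl'
  exact (tsum_congr hterm).trans tsum_mul_left

lemma jtheta_neg_inv {τ : ℂ} (hτ : 0 < τ.im) (z : ℂ) :
    jtheta (-1 / τ) (z / τ) =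
      -I * (-I * τ) ^ (1 / 2 : ℂ) * cexp (π * I * z ^ 2 / τ) * jtheta τ z := by
  have h0 : τ ≠ 0 := by rintro rfl; simp at hτ
  have hS : 0 < (-1 / τ).im := by
    simpa [neg_div, inv_neg] using UpperHalfPlane.im_inv_neg_coe_pos ⟨τ, hτ⟩
  have hI : -I = cexp (-(π / 2 * I)) := by
    rw [Complex.exp_neg, Complex.exp_pi_div_two_mul_I, Complex.inv_I]
  have hexp : cexp (π * I * (-1 / τ / 4 + z / τ)) =
      -I * cexp (π * I * z ^ 2 / τ) * cexp (π * I * (τ / 4 + z)) *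
        cexp (-π * I * (z - 1 / 2 + τ / 2) ^ 2 / τ) := by
    rw [hI, ← Complex.exp_add, ← Complex.exp_add, ← Complex.exp_add]
    congr 1
    field_simp
    ring
  rw [jtheta_eq_jacobiTheta₂ hτ, jtheta_eq_jacobiTheta₂ hS,
    show z + τ / 2 + 1 / 2 = (z - 1 / 2 + τ / 2) + 1 by ring, jacobiTheta₂_add_left,
    jacobiTheta₂_functional_equation (z - 1 / 2 + τ / 2) τ,
    show (z - 1 / 2 + τ / 2) / τ = z / τ + -1 / τ / 2 + 1 / 2 by field_simp; ring, hexp]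
  field_simp

lemma jthetaTerm_mul_I_half (y : ℝ) (n : ℤ) :
    jthetaTerm (y * I) (1 / 2) n =
      I * ((if Odd n then Real.exp (-π * n ^ 2 * y / 4) else 0 : ℝ) : ℂ) := by
  split_ifs with hn
  · obtain ⟨k, rfl⟩ := hn
    have hphase : cexp (π * I * (2 * k + 1) / 2) = I * (-1) ^ k := by
      rw [show (π * I * (2 * k + 1) / 2 : ℂ) = π / 2 * I + k * (π * I) by ring, Complex.exp_add,
        Complex.exp_pi_div_two_mul_I, Complex.exp_int_mul, Complex.exp_pi_mul_I]
    have hsq : ((-1 : ℂ) ^ k) * (-1) ^ k = 1 := by rw [← mul_zpow]; simp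
    have hexp : 2 * π * I * (((2 * k + 1 : ℤ) : ℂ) ^ 2 * (y * I) / 8 +
        ((2 * k + 1 : ℤ) : ℂ) * (1 / 2) / 2) =
        π * I * (2 * k + 1) / 2 + -π * (2 * k + 1) ^ 2 * y / 4 := by
      push_cast
      linear_combination (π * (2 * k + 1 : ℂ) ^ 2 * y / 4) * Complex.I_sq
    rw [jthetaTerm, chi4_two_mul_add_one, hexp, Complex.exp_add, hphase]
    push_cast
    linear_combination (I * cexp (-π * (2 * k + 1) ^ 2 * y / 4)) * hsq
  · rw [jthetaTerm, chi4_eq_zero_of_even (Int.not_odd_iff_even.1 hn)]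
    simp

lemma jtheta_mul_I_half_ne_zero {y : ℝ} (hy : 0 < y) : jtheta (y * I) (1 / 2) ≠ 0 := by
  intro h
  have hsum := hasSum_jthetaTerm (τ := y * I) (by simpa using hy) (1 / 2)
  rw [h, funext (jthetaTerm_mul_I_half y)] at hsum
  have hreal : HasSum (fun n : ℤ => if Odd n then Real.exp (-π * n ^ 2 * y / 4) else 0) 0 := by
    rw [← Complex.hasSum_ofReal, Complex.ofReal_zero, ← hasSum_mul_left_iff Complex.I_ne_zero,
      mul_zero]
    exact hsum
  have hzero := (hasSum_zero_iff_of_nonneg fun n => by positivity).1 hreal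
  simpa using congrFun hzero 1

end JacobiTheta

section DedekindEta

lemma dedekindEta_eq_eta (τ : ℂ) : dedekindEta τ = ModularForm.eta τ := by
  simp only [dedekindEta, ModularForm.eta, ModularForm.eta_q_eq_cexp, Function.Periodic.qParam]
  congr 2
  push_cast
  ring

lemma dedekindEta_ne_zero {τ : ℂ} (hτ : 0 < τ.im) : dedekindEta τ ≠ 0 :=
  dedekindEta_eq_eta τ ▸ ModularForm.eta_ne_zero hτ

lemma dedekindEta_add_one (τ : ℂ) : dedekindEta (τ + 1) = cexp (π * I / 12) * dedekindEta τ := by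
  have hfactor (n : ℕ) :
      1 - cexp (2 * π * I * (n + 1) * (τ + 1)) = 1 - cexp (2 * π * I * (n + 1) * τ) := by
    rw [show 2 * π * I * (n + 1) * (τ + 1) =
      2 * π * I * (n + 1) * τ + (n + 1 : ℕ) * (2 * π * I) by push_cast; ring, Complex.exp_add,
      Complex.exp_nat_mul_two_pi_mul_I, mul_one]
  simp only [dedekindEta, hfactor]
  rw [← mul_assoc, ← Complex.exp_add]
  congr 2
  ring

lemma sqrt_eq_sqrt_I_mul {τ : ℂ} (hτ : 0 < τ.im) :
    Complex.sqrt τ = Complex.sqrt I * (-I * τ) ^ (1 / 2 : ℂ) := by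
  have h0 : -I * τ ≠ 0 := mul_ne_zero (by simp) (by rintro rfl; simp at hτ)
  have harg : |arg (-I * τ)| < π / 2 := by
    rw [Complex.abs_arg_lt_pi_div_two_iff]
    exact Or.inl (by simpa using hτ)
  rw [abs_lt] at harg
  have hlog : Complex.log (I * (-I * τ)) = Complex.log I + Complex.log (-I * τ) := by
    refine Complex.log_mul I_ne_zero h0 ?_
    rw [Complex.arg_I]
    constructor <;> linarith
  have hsqrt (x : ℂ) : Complex.sqrt x = x ^ (1 / 2 : ℂ) := by simp [Complex.sqrt]
  rw [hsqrt, hsqrt, Complex.cpow_def_of_ne_zero I_ne_zero, Complex.cpow_def_of_ne_zero h0,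
    ← Complex.exp_add, ← add_mul, ← hlog, ← Complex.cpow_def_of_ne_zero (mul_ne_zero I_ne_zero h0),
    show I * (-I * τ) = τ by rw [← mul_assoc]; simp]

lemma dedekindEta_neg_inv {τ : ℂ} (hτ : 0 < τ.im) :
    dedekindEta (-1 / τ) = (-I * τ) ^ (1 / 2 : ℂ) * dedekindEta τ := by
  have hI : Complex.sqrt I ≠ 0 := by simp [Complex.sqrt]
  have h := ModularForm.eta_comp_eq_csqrt_I_inv (x := τ) hτ
  simp only [Function.comp_apply, Pi.smul_apply, Pi.mul_apply, smul_eq_mul] at h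
  rw [dedekindEta_eq_eta, dedekindEta_eq_eta, h, sqrt_eq_sqrt_I_mul hτ]
  field_simp

end DedekindEta

section Modularity

open UpperHalfPlane hiding I
open EisensteinSeries ModularGroup

lemma denom_mul (A B : SL2Z) (τ : ℍ) :
    denom (A * B : SL2Z) τ = denom A ↑(B • τ) * denom B τ := by
  rw [map_mul, map_mul, denom_cocycle_σ]
  simp [σ]

/-- The Jacobi slash action of weight `k` and index `t` of `SL₂(ℤ)` on functions of
`(τ, z) ∈ ℍ × ℂ`. The usual exponent `-2πi t c z² / (cτ + d)` is written with the cocycle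
`EisensteinSeries.D2 A τ = 2πi c / (cτ + d)`. -/
def jacobiSlash (k : ℤ) (t : ℂ) (F : ℍ → ℂ → ℂ) (A : SL2Z) (τ : ℍ) (z : ℂ) : ℂ :=
  F (A • τ) (z / denom A τ) * denom A τ ^ (-k) * cexp (-t * D2 A τ * z ^ 2)

lemma jacobiSlash_one (k : ℤ) (t : ℂ) (F : ℍ → ℂ → ℂ) : jacobiSlash k t F 1 = F := by
  funext τ z
  simp [jacobiSlash]

lemma jacobiSlash_mul (k : ℤ) (t : ℂ) (F : ℍ → ℂ → ℂ) (A B : SL2Z) :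
    jacobiSlash k t F (A * B) = jacobiSlash k t (jacobiSlash k t F A) B := by
  funext τ z
  have hB := denom_ne_zero B τ
  have hD : -t * D2 (A * B) τ * z ^ 2 =
      -t * D2 A (B • τ) * (z / denom B τ) ^ 2 + -t * D2 B τ * z ^ 2 := by
    rw [D2_mul, Pi.add_apply, ModularForm.SL_slash_apply, _root_.zpow_neg]
    field_simp
    ring
  rw [jacobiSlash, jacobiSlash, jacobiSlash, hD, Complex.exp_add, mul_smul, denom_mul, mul_zpow,
    div_div, mul_comm (denom A _) (denom B τ)]
  ring

/-- The quotient `θ/η³`, on which the multiplier systems of numerator and denominator cancel. -/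
def thetaDivEtaCubed (τ : ℍ) (z : ℂ) : ℂ := jtheta τ z / dedekindEta τ ^ 3

lemma jacobiSlash_thetaDivEtaCubed_T :
    jacobiSlash (-1) (1 / 2) thetaDivEtaCubed T = thetaDivEtaCubed := by
  funext τ z
  have hT : ((T • τ : ℍ) : ℂ) = τ + 1 := by rw [modular_T_smul, coe_vadd, add_comm]; simp
  have hdenom : denom T τ = 1 := by rw [denom_apply]; simp [T]
  have hexp : cexp (π * I / 12) ^ 3 = cexp (π * I / 4) := by
    rw [← Complex.exp_nat_mul]; congr 1; push_cast; ring
  rw [jacobiSlash, hdenom, D2_T, thetaDivEtaCubed, thetaDivEtaCubed, hT, jtheta_add_one_left,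
    dedekindEta_add_one, mul_pow, hexp]
  simp [mul_div_mul_left]

lemma jacobiSlash_thetaDivEtaCubed_S :
    jacobiSlash (-1) (1 / 2) thetaDivEtaCubed S = thetaDivEtaCubed := by
  funext τ z
  have hτ := τ.ne_zero
  have hη := dedekindEta_ne_zero τ.im_pos
  have hS : ((S • τ : ℍ) : ℂ) = -1 / τ := by rw [modular_S_smul]; simp [neg_div, inv_neg]
  have hroot : (-I * τ : ℂ) ^ (1 / 2 : ℂ) ≠ 0 := by simp [Complex.cpow_eq_zero_iff, hτ]
  have hsq : ((-I * τ : ℂ) ^ (1 / 2 : ℂ)) ^ 2 = -I * τ := by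
    rw [← Complex.cpow_nat_mul]; norm_num
  have hexp : cexp (π * I * z ^ 2 / τ) * cexp (-(1 / 2) * (2 * π * I / τ) * z ^ 2) = 1 := by
    rw [← Complex.exp_add, Complex.exp_eq_one_iff]
    exact ⟨0, by ring⟩
  rw [jacobiSlash, denom_S, D2_S, thetaDivEtaCubed, thetaDivEtaCubed, hS, jtheta_neg_inv τ.im_pos,
    dedekindEta_neg_inv τ.im_pos, neg_neg, zpow_one]
  generalize (-I * τ : ℂ) ^ (1 / 2 : ℂ) = r at hroot hsq ⊢
  generalize cexp (π * I * z ^ 2 / τ) = e at hexp ⊢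
  generalize cexp (-(1 / 2) * (2 * π * I / τ) * z ^ 2) = e' at hexp ⊢
  field_simp
  linear_combination (-I * τ * jtheta τ z) * hexp - jtheta τ z * hsq

lemma jacobiSlash_thetaDivEtaCubed (A : SL2Z) :
    jacobiSlash (-1) (1 / 2) thetaDivEtaCubed A = thetaDivEtaCubed := by
  have hA : A ∈ Subgroup.closure {S, T} :=
    SpecialLinearGroup.SL2Z_generators ▸ Subgroup.mem_top A
  induction hA using Subgroup.closure_induction with
  | mem A hA =>
    rcases hA with rfl | rfl
    · exact jacobiSlash_thetaDivEtaCubed_S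
    · exact jacobiSlash_thetaDivEtaCubed_T
  | one => exact jacobiSlash_one _ _ _
  | mul A B _ _ hA hB => rw [jacobiSlash_mul, hA, hB]
  | inv A _ hA => rw [← hA, ← jacobiSlash_mul, mul_inv_cancel, jacobiSlash_one, hA]

lemma jtheta_smul (A : SL2Z) (τ : ℍ) (z : ℂ) :
    jtheta ↑(A • τ) (z / denom A τ) * denom A τ * dedekindEta τ ^ 3 =
      dedekindEta ↑(A • τ) ^ 3 * cexp (1 / 2 * D2 A τ * z ^ 2) * jtheta τ z := by
  have hη := dedekindEta_ne_zero τ.im_pos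
  have hη' := dedekindEta_ne_zero (A • τ).im_pos
  have h := congrFun₂ (jacobiSlash_thetaDivEtaCubed A) τ z
  rw [jacobiSlash, thetaDivEtaCubed, thetaDivEtaCubed, neg_neg, zpow_one, neg_mul, neg_mul,
    Complex.exp_neg] at h
  have hexp := Complex.exp_ne_zero (1 / 2 * D2 A τ * z ^ 2)
  generalize cexp (1 / 2 * D2 A τ * z ^ 2) = e at hexp h ⊢
  field_simp at h
  linear_combination h

/-- `v` is the multiplier system `v_η^d`. The automorphy factor `(cτ + d)^(d/2)` is taken with
the principal branch. -/
def IsEtaMultiplier (d : ℕ) (v : SL2Z → ℂ) : Prop :=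
  ∀ A : SL2Z, ∀ τ : ℂ, 0 < τ.im →
    dedekindEta (((A.1 0 0 : ℂ) * τ + (A.1 0 1 : ℂ)) / ((A.1 1 0 : ℂ) * τ + (A.1 1 1 : ℂ))) ^ d
      = v A * ((A.1 1 0 : ℂ) * τ + (A.1 1 1 : ℂ)) ^ ((d : ℂ) / 2) * dedekindEta τ ^ d

lemma coe_smul_eq_div (A : SL2Z) (τ : ℍ) : ((A • τ : ℍ) : ℂ) =
    ((A.1 0 0 : ℂ) * τ + (A.1 0 1 : ℂ)) / ((A.1 1 0 : ℂ) * τ + (A.1 1 1 : ℂ)) := by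
  rw [coe_specialLinearGroup_apply]
  simp

variable {κ : Type*} [Fintype κ]

lemma IsEtaMultiplier.prod_jtheta_smul {v : SL2Z → ℂ} (hv : IsEtaMultiplier (3 * Fintype.card κ) v)
    (A : SL2Z) (τ : ℍ) (Z : κ → ℂ) :
    ∏ i, jtheta ↑(A • τ) (Z i / denom A τ) =
      v A * denom A τ ^ ((Fintype.card κ : ℂ) / 2) * cexp (1 / 2 * D2 A τ * ∑ i, Z i ^ 2) *
        ∏ i, jtheta τ (Z i) := by
  set n := Fintype.card κ with hn
  have hη := pow_ne_zero (3 * n) (dedekindEta_ne_zero τ.im_pos)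
  have hd := denom_ne_zero A τ
  have hprod := Finset.prod_congr (rfl : (Finset.univ : Finset κ) = _) fun i _ =>
    jtheta_smul A τ (Z i)
  simp only [Finset.prod_mul_distrib, Finset.prod_const, Finset.card_univ, ← pow_mul,
    ← Complex.exp_sum, ← Finset.mul_sum, ← hn] at hprod
  have hvA := hv A τ τ.im_pos
  rw [← coe_smul_eq_div, ← denom_apply] at hvA
  have hpow : denom A τ ^ (((3 * n : ℕ) : ℂ) / 2) = denom A τ ^ n * denom A τ ^ ((n : ℂ) / 2) := by
    rw [← Complex.cpow_natCast, ← Complex.cpow_add _ _ hd]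
    congr 1
    push_cast
    ring
  rw [hvA, hpow] at hprod
  refine mul_left_cancel₀ (mul_ne_zero hη (pow_ne_zero n hd)) ?_
  linear_combination hprod

end Modularity

section GramMatrix

lemma map_intCast_mulVec_intCast {κ ι R : Type*} [Fintype ι] [CommRing R]
    (B : Matrix κ ι ℤ) (x : ι → ℤ) (r : κ) :
    (B.map (Int.cast : ℤ → R) *ᵥ fun i => (x i : R)) r = ((B *ᵥ x) r : ℤ) := by
  simp [Matrix.mulVec, dotProduct]

variable {κ ι : Type*} [Fintype κ] [Fintype ι] (B : Matrix κ ι ℤ)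

lemma sum_mul_gram_mul {R : Type*} [CommRing R] (x y : ι → R) :
    ∑ i, ∑ j, x i * ((Bᵀ * B) i j : ℤ) * y j =
      (B.map (Int.cast : ℤ → R) *ᵥ x) ⬝ᵥ (B.map (Int.cast : ℤ → R) *ᵥ y) := by
  have hgram : (Bᵀ * B).map (Int.cast : ℤ → R) =
      (B.map (Int.cast : ℤ → R))ᵀ * B.map (Int.cast : ℤ → R) := by
    simpa only [Int.coe_castRingHom, Matrix.transpose_map] using
      Matrix.map_mul (f := Int.castRingHom R) (L := Bᵀ) (M := B)
  rw [dotProduct_comm, ← Matrix.dotProduct_transpose_mulVec, Matrix.mulVec_mulVec, ← hgram]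
  simp only [dotProduct, Matrix.mulVec, Matrix.map_apply, Finset.mul_sum, mul_assoc]

lemma bilinZ_gram (x y : ι → ℤ) : bilinZ (Bᵀ * B) x y = (B *ᵥ x) ⬝ᵥ (B *ᵥ y) := by
  have hmap : B.map (Int.cast : ℤ → ℤ) = B := by ext; simp
  simpa only [bilinZ, hmap, Int.cast_id] using sum_mul_gram_mul (R := ℤ) B x y

lemma bilinQ_gram (x y : ι → ℚ) : bilinQ (Bᵀ * B) x y =
    (B.map (Int.cast : ℤ → ℚ) *ᵥ x) ⬝ᵥ (B.map (Int.cast : ℤ → ℚ) *ᵥ y) :=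
  sum_mul_gram_mul B x y

lemma bilinC_gram (x y : ι → ℂ) : bilinC (Bᵀ * B) x y =
    (B.map (Int.cast : ℤ → ℂ) *ᵥ x) ⬝ᵥ (B.map (Int.cast : ℤ → ℂ) *ᵥ y) :=
  sum_mul_gram_mul B x y

lemma exists_transpose_mul_self_mulVec_eq {K : Type*} [Field K] [LinearOrder K]
    [IsStrictOrderedRing K] (A : Matrix κ ι K) (x : κ → K) : ∃ l, (Aᵀ * A) *ᵥ l = Aᵀ *ᵥ x := by
  have hle : (Aᵀ * A).mulVecLin.range ≤ Aᵀ.mulVecLin.range := by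
    rw [Matrix.mulVecLin_mul]
    exact LinearMap.range_comp_le_range _ _
  have hrange : (Aᵀ * A).mulVecLin.range = Aᵀ.mulVecLin.range :=
    Submodule.eq_of_le_of_finrank_eq hle (by
      rw [← Matrix.rank, ← Matrix.rank, Matrix.rank_transpose_mul_self, Matrix.rank_transpose])
  have hmem : Aᵀ *ᵥ x ∈ (Aᵀ * A).mulVecLin.range := hrange ▸ ⟨x, rfl⟩
  exact hmem

/-- Coordinates, with respect to the columns of `B`, of the orthogonal projection of `k / 2` to
the column space: a solution `l` of the normal equations. It is unique only up to the kernel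
of `B`. -/
def halfProjection (k : κ → ℤ) : ι → ℚ :=
  (exists_transpose_mul_self_mulVec_eq (B.map (Int.cast : ℤ → ℚ)) fun i => (k i : ℚ) / 2).choose

lemma transpose_mul_self_mulVec_halfProjection (k : κ → ℤ) :
    ((B.map (Int.cast : ℤ → ℚ))ᵀ * B.map (Int.cast : ℤ → ℚ)) *ᵥ halfProjection B k =
      (B.map (Int.cast : ℤ → ℚ))ᵀ *ᵥ fun i => (k i : ℚ) / 2 :=
  (exists_transpose_mul_self_mulVec_eq (B.map (Int.cast : ℤ → ℚ))
    fun i => (k i : ℚ) / 2).choose_spec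

lemma mulVec_halfProjection_dotProduct {K : Type*} [Field K] [CharZero K] (k : κ → ℤ) (z : ι → K) :
    (B.map (Int.cast : ℤ → K) *ᵥ fun i => (halfProjection B k i : K)) ⬝ᵥ
      (B.map (Int.cast : ℤ → K) *ᵥ z) =
      (fun i => (k i : K) / 2) ⬝ᵥ (B.map (Int.cast : ℤ → K) *ᵥ z) := by
  have hK : (B.map (Int.cast : ℤ → K))ᵀ *ᵥ (B.map (Int.cast : ℤ → K) *ᵥ
      fun i => (halfProjection B k i : K)) =
        (B.map (Int.cast : ℤ → K))ᵀ *ᵥ fun i => (k i : K) / 2 := by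
    have h := transpose_mul_self_mulVec_halfProjection B k
    rw [← Matrix.mulVec_mulVec] at h
    funext j
    have hj := congrArg (Rat.cast : ℚ → K) (congrFun h j)
    simpa [Matrix.mulVec, dotProduct] using hj
  rw [← Matrix.dotProduct_transpose_mulVec, hK, Matrix.dotProduct_transpose_mulVec]

lemma mulVec_halfProjection_eq {k : κ → ℤ} {y : ι → ℚ}
    (hy : (B.map (Int.cast : ℤ → ℚ))ᵀ *ᵥ (B.map (Int.cast : ℤ → ℚ) *ᵥ y) =
      (B.map (Int.cast : ℤ → ℚ))ᵀ *ᵥ fun i => (k i : ℚ) / 2) :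
    B.map (Int.cast : ℤ → ℚ) *ᵥ halfProjection B k = B.map (Int.cast : ℤ → ℚ) *ᵥ y := by
  have hker : halfProjection B k - y ∈
      ((B.map (Int.cast : ℤ → ℚ))ᵀ * B.map (Int.cast : ℤ → ℚ)).mulVecLin.ker := by
    rw [LinearMap.mem_ker, Matrix.mulVecLin_apply, Matrix.mulVec_sub,
      transpose_mul_self_mulVec_halfProjection, ← Matrix.mulVec_mulVec, hy, sub_self]
  rw [Matrix.ker_mulVecLin_transpose_mul_self, LinearMap.mem_ker, Matrix.mulVecLin_apply,
    Matrix.mulVec_sub, sub_eq_zero] at hker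
  exact hker

end GramMatrix

section ThetaPullback

open UpperHalfPlane (denom)
open ModularGroup (denom_apply)
open EisensteinSeries (D2)

variable {κ ι : Type*} [Fintype κ] [Fintype ι] {B : Matrix κ ι ℤ}

variable (B) in
/-- The pullback of the theta product `θ(τ, z₁) ⋯ θ(τ, z_m)` along the linear map `B`. -/
def thetaPullback (τ : ℂ) (w : ι → ℂ) : ℂ :=
  ∏ i, jtheta τ ((B.map (Int.cast : ℤ → ℂ) *ᵥ w) i)

variable (B) in
/-- The index `(n, l)` in the Fourier expansion of `thetaPullback B` of the product of the terms
of indices `k i` of the theta series. -/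
def thetaPullbackIndex (k : κ → ℤ) : ℚ × (ι → ℚ) :=
  (∑ i, (k i : ℚ) ^ 2 / 8, halfProjection B k)

variable (B) in
/-- The Fourier coefficients of `thetaPullback B`. Only finitely many terms with the same
`thetaPullbackIndex` exist, so the sum is never a junk value. -/
def thetaPullbackCoeff (p : ℚ × (ι → ℚ)) : ℂ :=
  ∑' k : thetaPullbackIndex B ⁻¹' {p}, ∏ i, chi4 (k.1 i)

lemma exists_thetaPullbackIndex_eq_of_coeff_ne_zero {p : ℚ × (ι → ℚ)}
    (hp : thetaPullbackCoeff B p ≠ 0) :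
    ∃ k, thetaPullbackIndex B k = p ∧ ∀ i, Odd (k i) := by
  have hk : ∃ k : thetaPullbackIndex B ⁻¹' {p}, ∏ i, chi4 (k.1 i) ≠ 0 := by
    by_contra! h
    exact hp (by simp only [thetaPullbackCoeff, h, tsum_zero])
  obtain ⟨⟨k, hkp⟩, hk⟩ := hk
  exact ⟨k, hkp, fun i =>
    chi4_ne_zero_iff_odd.1 (Finset.prod_ne_zero_iff.1 hk i (Finset.mem_univ i))⟩

lemma thetaPullbackCoeff_index_ne_zero {k : κ → ℤ} (hk : ∀ i, Odd (k i))
    (huniq : ∀ k', thetaPullbackIndex B k' = thetaPullbackIndex B k → (∀ i, Odd (k' i)) → k' = k) :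
    thetaPullbackCoeff B (thetaPullbackIndex B k) ≠ 0 := by
  have hsingle : thetaPullbackCoeff B (thetaPullbackIndex B k) = ∏ i, chi4 (k i) := by
    refine tsum_eq_single (⟨k, rfl⟩ : thetaPullbackIndex B ⁻¹' {thetaPullbackIndex B k}) ?_
    rintro ⟨k', hk'⟩ hne
    by_contra h
    exact hne (Subtype.ext (huniq k' hk' fun i =>
      chi4_ne_zero_iff_odd.1 (Finset.prod_ne_zero_iff.1 h i (Finset.mem_univ i))))
  rw [hsingle]
  exact Finset.prod_ne_zero_iff.2 fun i _ => chi4_ne_zero_iff_odd.2 (hk i)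

lemma two_mul_thetaPullbackIndex_fst_sub_bilinQ (k : κ → ℤ) :
    2 * (thetaPullbackIndex B k).1 -
        bilinQ (Bᵀ * B) (thetaPullbackIndex B k).2 (thetaPullbackIndex B k).2 =
      ∑ i, ((k i : ℚ) / 2 - (B.map (Int.cast : ℤ → ℚ) *ᵥ halfProjection B k) i) ^ 2 := by
  have horth := mulVec_halfProjection_dotProduct (K := ℚ) B k (halfProjection B k)
  simp only [Rat.cast_id] at horth
  have hsq (x y : κ → ℚ) : ∑ i, (x i - y i) ^ 2 = x ⬝ᵥ x - 2 * (x ⬝ᵥ y) + y ⬝ᵥ y := by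
    simp only [dotProduct, Finset.mul_sum, ← Finset.sum_sub_distrib, ← Finset.sum_add_distrib]
    exact Finset.sum_congr rfl fun i _ => by ring
  have hk : 2 * ∑ i, (k i : ℚ) ^ 2 / 8 = (fun i => (k i : ℚ) / 2) ⬝ᵥ fun i => (k i : ℚ) / 2 := by
    rw [dotProduct, Finset.mul_sum]
    exact Finset.sum_congr rfl fun i _ => by ring
  rw [bilinQ_gram, hsq, thetaPullbackIndex, hk, ← horth]
  ring

lemma inHalfDual_thetaPullbackIndex_snd (k : κ → ℤ) :
    InHalfDual (Bᵀ * B) (thetaPullbackIndex B k).2 := by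
  intro x
  have h := mulVec_halfProjection_dotProduct (K := ℚ) B k fun i => (x i : ℚ)
  simp only [Rat.cast_id] at h
  refine ⟨k ⬝ᵥ (B *ᵥ x), ?_⟩
  rw [bilinQ_gram, thetaPullbackIndex, h]
  simp only [dotProduct, map_intCast_mulVec_intCast, Finset.mul_sum]
  push_cast
  exact Finset.sum_congr rfl fun i _ => by ring

lemma thetaPullbackCoeff_support {p : ℚ × (ι → ℚ)} (hp : thetaPullbackCoeff B p ≠ 0) :
    0 ≤ p.1 ∧ InHalfDual (Bᵀ * B) p.2 ∧ 0 ≤ 2 * p.1 - bilinQ (Bᵀ * B) p.2 p.2 := by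
  obtain ⟨k, rfl, -⟩ := exists_thetaPullbackIndex_eq_of_coeff_ne_zero hp
  refine ⟨Finset.sum_nonneg fun i _ => by positivity, inHalfDual_thetaPullbackIndex_snd k, ?_⟩
  rw [two_mul_thetaPullbackIndex_fst_sub_bilinQ]
  positivity

lemma prod_jthetaTerm_eq (τ : ℂ) (z : ι → ℂ) (k : κ → ℤ) :
    ∏ i, jthetaTerm τ ((B.map (Int.cast : ℤ → ℂ) *ᵥ z) i) (k i) = (∏ i, chi4 (k i)) *
      cexp (2 * π * I * ((thetaPullbackIndex B k).1 * τ +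
        bilinC (Bᵀ * B) (fun i => ((thetaPullbackIndex B k).2 i : ℂ)) z)) := by
  simp only [jthetaTerm, Finset.prod_mul_distrib, ← Complex.exp_sum, ← Finset.mul_sum]
  rw [bilinC_gram, thetaPullbackIndex, mulVec_halfProjection_dotProduct]
  congr 3
  push_cast
  rw [Finset.sum_mul, dotProduct, ← Finset.sum_add_distrib]
  exact Finset.sum_congr rfl fun i _ => by ring

lemma hasSum_thetaPullbackCoeff_mul_cexp {τ : ℂ} (hτ : 0 < τ.im) (z : ι → ℂ) :
    HasSum (fun p : ℚ × (ι → ℚ) => thetaPullbackCoeff B p *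
      cexp (2 * π * I * (p.1 * τ + bilinC (Bᵀ * B) (fun i => (p.2 i : ℂ)) z)))
      (thetaPullback B τ z) := by
  have hsum := hasSum_prod_pi fun i => hasSum_jthetaTerm hτ ((B.map (Int.cast : ℤ → ℂ) *ᵥ z) i)
  simp only [prod_jthetaTerm_eq] at hsum
  refine (hsum.tsum_fiberwise (thetaPullbackIndex B)).congr_fun fun p => ?_
  rw [thetaPullbackCoeff, ← tsum_mul_right]
  exact tsum_congr fun k => by rw [k.2]

lemma differentiableOn_thetaPullback :
    DifferentiableOn ℂ (fun p : ℂ × (ι → ℂ) => thetaPullback B p.1 p.2) {p | 0 < p.1.im} := by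
  intro p hp
  have hfactor (i : κ) : DifferentiableAt ℂ
      (fun p : ℂ × (ι → ℂ) => jtheta p.1 ((B.map (Int.cast : ℤ → ℂ) *ᵥ p.2) i)) p := by
    refine DifferentiableAt.comp (g := fun p : ℂ × ℂ => jtheta p.1 p.2)
      (f := fun p : ℂ × (ι → ℂ) => (p.1, (B.map (Int.cast : ℤ → ℂ) *ᵥ p.2) i)) p
      (differentiableAt_jtheta hp) ?_
    simp only [Matrix.mulVec, dotProduct]
    fun_prop
  exact (HasFDerivAt.finsetProd fun i _ =>
    (hfactor i).hasFDerivAt).differentiableAt.differentiableWithinAt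

lemma thetaPullback_smul {v : SL2Z → ℂ} (hv : IsEtaMultiplier (3 * Fintype.card κ) v) (A : SL2Z)
    (τ : UpperHalfPlane) (z : ι → ℂ) :
    thetaPullback B ↑(A • τ) (fun i => z i / denom A τ) =
      v A * denom A τ ^ ((Fintype.card κ : ℂ) / 2) *
        cexp (1 / 2 * D2 A τ * bilinC (Bᵀ * B) z z) * thetaPullback B τ z := by
  have hlin : (B.map (Int.cast : ℤ → ℂ) *ᵥ fun i => z i / denom A τ) =
      fun i => (B.map (Int.cast : ℤ → ℂ) *ᵥ z) i / denom A τ := by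
    funext i
    simp only [Matrix.mulVec, dotProduct, Finset.sum_div, mul_div_assoc]
  have hsq : bilinC (Bᵀ * B) z z = ∑ i, (B.map (Int.cast : ℤ → ℂ) *ᵥ z) i ^ 2 := by
    simp only [bilinC_gram, dotProduct, sq]
  rw [thetaPullback, hlin, hsq, hv.prod_jtheta_smul, thetaPullback]

lemma thetaPullback_add_mul_add (hB : ∀ w, Even (∑ i, (B *ᵥ w) i)) (x y : ι → ℤ) (τ : ℂ)
    (z : ι → ℂ) :
    thetaPullback B τ (fun i => z i + x i * τ + y i) =
      cexp (-(π * I) * (bilinZ (Bᵀ * B) x x * τ + 2 * bilinC (Bᵀ * B) (fun i => (x i : ℂ)) z)) *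
        thetaPullback B τ z := by
  have hvec : (fun j => z j + x j * τ + y j) =
      z + τ • (fun j => (x j : ℂ)) + fun j => (y j : ℂ) := by
    funext j
    simp [mul_comm]
  have hlin (i : κ) : (B.map (Int.cast : ℤ → ℂ) *ᵥ fun j => z j + x j * τ + y j) i =
      (B.map (Int.cast : ℤ → ℂ) *ᵥ z) i + ((B *ᵥ x) i : ℤ) * τ + ((B *ᵥ y) i : ℤ) := by
    simp only [hvec, Matrix.mulVec_add, Matrix.mulVec_smul, Pi.add_apply, Pi.smul_apply,
      map_intCast_mulVec_intCast, smul_eq_mul, mul_comm τ]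
  have hsign : ∏ i, (-1 : ℂ) ^ ((B *ᵥ x) i + (B *ᵥ y) i) = 1 := by
    rw [prod_zpow_eq_zpow_sum₀ (by norm_num), Finset.sum_add_distrib]
    exact ((hB x).add (hB y)).neg_one_zpow
  simp only [thetaPullback, hlin, jtheta_add_mul_add, Finset.prod_mul_distrib, hsign, one_mul,
    ← Complex.exp_sum, ← Finset.mul_sum]
  rw [bilinZ_gram, bilinC_gram]
  congr 3
  simp only [dotProduct, map_intCast_mulVec_intCast]
  push_cast
  rw [Finset.sum_add_distrib, Finset.sum_mul, Finset.mul_sum]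
  congr 1 <;> exact Finset.sum_congr rfl fun i _ => by ring

lemma isJacobiForm_thetaPullback (hB : ∀ w, Even (∑ i, (B *ᵥ w) i)) {v : SL2Z → ℂ}
    (hv : IsEtaMultiplier (3 * Fintype.card κ) v) :
    IsJacobiForm (Bᵀ * B) ((Fintype.card κ : ℚ) / 2) 1 v (fun _ _ => 1) (thetaPullbackCoeff B)
      (thetaPullback B) where
  holo := differentiableOn_thetaPullback
  modular A τ hτ z := by
    have h := thetaPullback_smul (B := B) hv A ⟨τ, hτ⟩ z
    rw [coe_smul_eq_div, D2, denom_apply] at h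
    have hexp : π * I * ((1 : ℚ) : ℂ) * A.1 1 0 * bilinC (Bᵀ * B) z z / (A.1 1 0 * τ + A.1 1 1) =
        1 / 2 * (2 * π * I * A 1 0 / (A.1 1 0 * τ + A.1 1 1)) * bilinC (Bᵀ * B) z z := by
      push_cast; ring
    rw [hexp]
    push_cast
    exact h
  elliptic x y τ _ z := by
    simpa only [Rat.cast_one, mul_one, one_mul] using thetaPullback_add_mul_add hB x y τ z
  support p hp := by simpa only [mul_one] using thetaPullbackCoeff_support hp
  expansion τ hτ z := hasSum_thetaPullbackCoeff_mul_cexp hτ z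

lemma exists_thetaPullback_ne_zero (hrow : ∀ i, ∃ w, (B *ᵥ w) i ≠ 0) {y : ℝ} (hy : 0 < y) :
    ∃ w, thetaPullback B (y * I) w ≠ 0 := by
  obtain ⟨w, hw⟩ := Module.Dual.exists_forall_ne_zero_of_forall_exists (K := ℂ)
    (fun i : κ => LinearMap.proj i ∘ₗ (B.map (Int.cast : ℤ → ℂ)).mulVecLin) fun i => by
      obtain ⟨w, hw⟩ := hrow i
      refine ⟨fun j => (w j : ℂ), ?_⟩
      rw [LinearMap.comp_apply, Matrix.mulVecLin_apply, LinearMap.proj_apply,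
        map_intCast_mulVec_intCast]
      exact_mod_cast hw
  have hdiff : Differentiable ℂ (jtheta (y * I)) := fun z =>
    (differentiableAt_jtheta (p := (y * I, z)) (by simpa using hy)).comp z
      (f := fun z => (y * I, z)) (by fun_prop)
  obtain ⟨t, ht⟩ := exists_forall_apply_mul_ne_zero hdiff (jtheta_mul_I_half_ne_zero hy) hw
  refine ⟨t • w, Finset.prod_ne_zero_iff.2 fun i _ => ?_⟩
  rw [Matrix.mulVec_smul]
  exact ht i

end ThetaPullback

section OddSum

variable {κ : Type*} [Fintype κ] {b : κ → ℤ}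

lemma sum_intCast_sq (b : κ → ℤ) : ∑ i, (b i : ℚ) ^ 2 = (b ⬝ᵥ b : ℤ) := by
  simp [dotProduct, sq]

lemma ne_zero_of_odd_sum (hodd : Odd (∑ i, b i)) : b ≠ 0 := by
  rintro rfl
  simp at hodd

lemma two_le_dotProduct_self (h2 : ∃ i j, i ≠ j ∧ b i ≠ 0 ∧ b j ≠ 0) : 2 ≤ b ⬝ᵥ b := by
  obtain ⟨i, j, hij, hi, hj⟩ := h2
  have hle : ∑ r ∈ {i, j}, b r * b r ≤ b ⬝ᵥ b :=
    Finset.sum_le_sum_of_subset_of_nonneg (Finset.subset_univ _) fun r _ _ => mul_self_nonneg (b r)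
  rw [Finset.sum_pair hij] at hle
  linarith [mul_self_pos.2 hi, mul_self_pos.2 hj]

lemma odd_dotProduct (hodd : Odd (∑ i, b i)) {k : κ → ℤ} (hk : ∀ i, Odd (k i)) :
    Odd (k ⬝ᵥ b) := by
  have hdiff : Even (k ⬝ᵥ b - ∑ i, b i) := by
    rw [dotProduct, ← Finset.sum_sub_distrib]
    refine Finset.even_sum _ fun i _ => ?_
    rw [← sub_one_mul]
    exact ((hk i).sub_odd odd_one).mul_right _
  simpa using hdiff.add_odd hodd

lemma exists_odd_dotProduct_eq_one (hodd : Odd (∑ i, b i)) (hgcd : Finset.univ.gcd b = 1) :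
    ∃ k : κ → ℤ, (∀ i, Odd (k i)) ∧ k ⬝ᵥ b = 1 := by
  obtain ⟨u, hu⟩ := Finset.gcd_eq_sum_mul Finset.univ b
  obtain ⟨s, hs⟩ := hodd
  refine ⟨fun i => 2 * (-s * u i) + 1, fun i => ⟨-s * u i, rfl⟩, ?_⟩
  calc ∑ i, (2 * (-s * u i) + 1) * b i = ∑ i, b i - 2 * s * ∑ i, b i * u i := by
        rw [Finset.mul_sum, ← Finset.sum_sub_distrib]
        exact Finset.sum_congr rfl fun i _ => by ring
    _ = 1 := by rw [← hu, hgcd, hs]; ring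

lemma eq_of_dotProduct_self_mul_sub_eq (h2 : 2 ≤ b ⬝ᵥ b) {k k' : κ → ℤ} (hk : ∀ i, Odd (k i))
    (hk' : ∀ i, Odd (k' i)) (hkb : k ⬝ᵥ b = 1) (hkb' : k' ⬝ᵥ b = 1 ∨ k' ⬝ᵥ b = -1)
    (hsub : ∀ i, (b ⬝ᵥ b) * (k i - k' i) = (k ⬝ᵥ b - k' ⬝ᵥ b) * b i) : k' = k := by
  rcases hkb' with h | h
  · funext i
    have hi : (b ⬝ᵥ b) * (k i - k' i) = 0 := by rw [hsub, hkb, h, sub_self, zero_mul]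
    exact (sub_eq_zero.1 ((mul_eq_zero.1 hi).resolve_left (by lia))).symm
  · -- Here `k - k' = 2u` with `(b, b) u = b` and `(u, b) = 1`, so `(b, b) (u, u) = 1`.
    exfalso
    choose u hu using fun i => (hk i).sub_odd (hk' i)
    have hbu (i : κ) : (b ⬝ᵥ b) * u i = b i := by
      have hi := hsub i
      rw [hkb, h, hu] at hi
      linarith
    have hub : u ⬝ᵥ b = 1 := by
      have hkk : k - k' = u + u := funext hu
      have hdot : (k - k') ⬝ᵥ b = 2 := by rw [sub_dotProduct, hkb, h]; norm_num
      rw [hkk, add_dotProduct] at hdot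
      linarith
    have huu : (b ⬝ᵥ b) * (u ⬝ᵥ u) = 1 := by
      rw [← hub, ← smul_eq_mul, ← dotProduct_smul]
      exact congrArg _ (funext hbu)
    exact absurd (Int.le_of_dvd one_pos ⟨_, huu.symm⟩) (by lia)

end OddSum

section Hyperplane

variable {κ ι : Type*} [Fintype κ] [Fintype ι] {b : κ → ℤ} {B : Matrix κ ι ℤ}

/-- The columns of `B` generate the lattice of all vectors in `D_m` orthogonal to `v = 2b`. -/
def GeneratesOrthogonal (b : κ → ℤ) (B : Matrix κ ι ℤ) : Prop :=
  Set.range (fun w : ι → ℤ => B *ᵥ w) =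
    {x : κ → ℤ | (2 : ℤ) ∣ ∑ i, x i ∧ ∑ i, x i * (2 * b i) = 0}

namespace GeneratesOrthogonal

lemma even_sum_mulVec (hB : GeneratesOrthogonal b B) (w : ι → ℤ) : Even (∑ i, (B *ᵥ w) i) :=
  even_iff_two_dvd.2 (hB.subset ⟨w, rfl⟩).1

lemma mulVec_dotProduct_eq_zero (hB : GeneratesOrthogonal b B) (w : ι → ℤ) :
    (B *ᵥ w) ⬝ᵥ b = 0 := by
  have h := (hB.subset ⟨w, rfl⟩).2
  simpa only [mul_left_comm _ (2 : ℤ), ← Finset.mul_sum, mul_eq_zero, two_ne_zero, false_or,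
    dotProduct] using h

lemma exists_mulVec_eq_two_smul (hB : GeneratesOrthogonal b B) {x : κ → ℤ} (hx : x ⬝ᵥ b = 0) :
    ∃ w, B *ᵥ w = 2 • x := by
  refine hB.superset ⟨Finset.dvd_sum fun i _ => by simp, ?_⟩
  calc ∑ i, (2 • x) i * (2 * b i) = 4 * (x ⬝ᵥ b) := by
        rw [dotProduct, Finset.mul_sum]
        exact Finset.sum_congr rfl fun i _ => by
          rw [Pi.smul_apply, nsmul_eq_mul]; push_cast; ring
    _ = 0 := by rw [hx, mul_zero]

lemma map_transpose_mulVec_eq_zero (hB : GeneratesOrthogonal b B) :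
    (B.map (Int.cast : ℤ → ℚ))ᵀ *ᵥ (fun i => (b i : ℚ)) = 0 := by
  funext j
  have h := hB.mulVec_dotProduct_eq_zero (Pi.single j 1)
  rw [Matrix.mulVec_single_one] at h
  simp only [Matrix.mulVec, dotProduct, Matrix.transpose_apply, Matrix.map_apply, Pi.zero_apply]
  exact_mod_cast h

lemma exists_mulVec_ne_zero (hB : GeneratesOrthogonal b B)
    (h2 : ∃ i j, i ≠ j ∧ b i ≠ 0 ∧ b j ≠ 0) (i : κ) : ∃ w, (B *ᵥ w) i ≠ 0 := by
  obtain ⟨j, hji, hj⟩ : ∃ j, j ≠ i ∧ b j ≠ 0 := by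
    obtain ⟨r, s, hrs, hr, hs⟩ := h2
    by_cases h : r = i
    · exact ⟨s, h ▸ hrs.symm, hs⟩
    · exact ⟨r, h, hr⟩
  obtain ⟨w, hw⟩ := hB.exists_mulVec_eq_two_smul
    (x := Pi.single i (b j) - Pi.single j (b i)) (by
      rw [sub_dotProduct, single_dotProduct, single_dotProduct, mul_comm, sub_self])
  exact ⟨w, by simp [hw, hji.symm, hj]⟩

lemma mulVec_halfProjection (hB : GeneratesOrthogonal b B) (hb : b ≠ 0) (k : κ → ℤ) :
    B.map (Int.cast : ℤ → ℚ) *ᵥ halfProjection B k = (fun i => (k i : ℚ) / 2) -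
      (((k ⬝ᵥ b : ℤ) : ℚ) / (2 * (b ⬝ᵥ b : ℤ))) • fun i => (b i : ℚ) := by
  have hq : ((b ⬝ᵥ b : ℤ) : ℚ) ≠ 0 := by exact_mod_cast dotProduct_self_eq_zero.not.2 hb
  obtain ⟨w, hw⟩ := hB.exists_mulVec_eq_two_smul (x := (b ⬝ᵥ b) • k - (k ⬝ᵥ b) • b) (by
    rw [sub_dotProduct, smul_dotProduct, smul_dotProduct, smul_eq_mul, smul_eq_mul, mul_comm,
      sub_self])
  have hproj : B.map (Int.cast : ℤ → ℚ) *ᵥ ((4 * ((b ⬝ᵥ b : ℤ) : ℚ))⁻¹ • fun j => (w j : ℚ)) =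
      (fun i => (k i : ℚ) / 2) -
        (((k ⬝ᵥ b : ℤ) : ℚ) / (2 * (b ⬝ᵥ b : ℤ))) • fun i => (b i : ℚ) := by
    funext i
    rw [Matrix.mulVec_smul, Pi.smul_apply, map_intCast_mulVec_intCast, hw]
    simp only [Pi.smul_apply, Pi.sub_apply, smul_eq_mul, nsmul_eq_mul, Int.cast_mul, Int.cast_sub,
      Nat.cast_ofNat, Int.cast_ofNat]
    field_simp
    ring
  rw [← hproj]
  refine mulVec_halfProjection_eq B ?_
  rw [hproj, Matrix.mulVec_sub, Matrix.mulVec_smul, hB.map_transpose_mulVec_eq_zero, smul_zero,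
    sub_zero]

lemma two_mul_fst_sub_bilinQ (hB : GeneratesOrthogonal b B) (hb : b ≠ 0) (k : κ → ℤ) :
    2 * (thetaPullbackIndex B k).1 -
        bilinQ (Bᵀ * B) (thetaPullbackIndex B k).2 (thetaPullbackIndex B k).2 =
      ((k ⬝ᵥ b : ℤ) : ℚ) ^ 2 / (4 * ∑ i, (b i : ℚ) ^ 2) := by
  have hq : ((b ⬝ᵥ b : ℤ) : ℚ) ≠ 0 := by exact_mod_cast dotProduct_self_eq_zero.not.2 hb
  rw [two_mul_thetaPullbackIndex_fst_sub_bilinQ, hB.mulVec_halfProjection hb]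
  simp only [Pi.sub_apply, Pi.smul_apply, sub_sub_cancel, smul_eq_mul, mul_pow, ← Finset.mul_sum]
  rw [sum_intCast_sq]
  field_simp
  ring

lemma one_div_le_of_thetaPullbackCoeff_ne_zero (hB : GeneratesOrthogonal b B)
    (hodd : Odd (∑ i, b i)) {p : ℚ × (ι → ℚ)} (hp : thetaPullbackCoeff B p ≠ 0) :
    1 / (4 * ∑ i, (b i : ℚ) ^ 2) ≤ 2 * p.1 - bilinQ (Bᵀ * B) p.2 p.2 := by
  obtain ⟨k, rfl, hk⟩ := exists_thetaPullbackIndex_eq_of_coeff_ne_zero hp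
  have hkb : 1 ≤ (k ⬝ᵥ b) ^ 2 := by
    have hne : k ⬝ᵥ b ≠ 0 := fun h => by simpa [h] using odd_dotProduct hodd hk
    exact Int.add_one_le_iff.2 (sq_pos_of_ne_zero hne)
  rw [hB.two_mul_fst_sub_bilinQ (ne_zero_of_odd_sum hodd)]
  gcongr
  exact_mod_cast hkb

lemma eq_of_thetaPullbackIndex_eq (hB : GeneratesOrthogonal b B)
    (h2 : ∃ i j, i ≠ j ∧ b i ≠ 0 ∧ b j ≠ 0) (hodd : Odd (∑ i, b i)) {k k' : κ → ℤ}
    (hk : ∀ i, Odd (k i)) (hk' : ∀ i, Odd (k' i)) (hkb : k ⬝ᵥ b = 1)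
    (h : thetaPullbackIndex B k' = thetaPullbackIndex B k) : k' = k := by
  have hb := ne_zero_of_odd_sum hodd
  have hq : ((b ⬝ᵥ b : ℤ) : ℚ) ≠ 0 := by exact_mod_cast dotProduct_self_eq_zero.not.2 hb
  have hsq : (k' ⬝ᵥ b) ^ 2 = 1 := by
    have hnorm := hB.two_mul_fst_sub_bilinQ hb k'
    rw [h, hB.two_mul_fst_sub_bilinQ hb, hkb, sum_intCast_sq,
      div_left_inj' (mul_ne_zero four_ne_zero hq)] at hnorm
    exact_mod_cast hnorm.symm
  have hproj : B.map (Int.cast : ℤ → ℚ) *ᵥ halfProjection B k' =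
      B.map (Int.cast : ℤ → ℚ) *ᵥ halfProjection B k := congrArg _ (congrArg Prod.snd h)
  rw [hB.mulVec_halfProjection hb, hB.mulVec_halfProjection hb] at hproj
  refine eq_of_dotProduct_self_mul_sub_eq (two_le_dotProduct_self h2) hk hk' hkb
    (sq_eq_one_iff.1 hsq) fun i => ?_
  have hi := congrFun hproj i
  simp only [Pi.sub_apply, Pi.smul_apply, smul_eq_mul] at hi
  field_simp at hi
  have hsub : ((b ⬝ᵥ b : ℤ) : ℚ) * (k i - k' i) = ((k ⬝ᵥ b : ℤ) - (k' ⬝ᵥ b : ℤ)) * b i := by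
    linear_combination -hi
  exact_mod_cast hsub

lemma exists_thetaPullbackCoeff_ne_zero (hB : GeneratesOrthogonal b B)
    (h2 : ∃ i j, i ≠ j ∧ b i ≠ 0 ∧ b j ≠ 0) (hodd : Odd (∑ i, b i))
    (hgcd : Finset.univ.gcd b = 1) : ∃ p, thetaPullbackCoeff B p ≠ 0 ∧
      2 * p.1 - bilinQ (Bᵀ * B) p.2 p.2 = 1 / (4 * ∑ i, (b i : ℚ) ^ 2) := by
  obtain ⟨k, hk, hkb⟩ := exists_odd_dotProduct_eq_one hodd hgcd
  refine ⟨thetaPullbackIndex B k, thetaPullbackCoeff_index_ne_zero hk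
    fun k' h hk' => hB.eq_of_thetaPullbackIndex_eq h2 hodd hk hk' hkb h, ?_⟩
  rw [hB.two_mul_fst_sub_bilinQ (ne_zero_of_odd_sum hodd), hkb, Int.cast_one, one_pow]

end GeneratesOrthogonal

end Hyperplane

theorem statement13_general {κ ι : Type*} [Fintype κ] [Fintype ι] {b : κ → ℤ}
    (h2 : ∃ i j, i ≠ j ∧ b i ≠ 0 ∧ b j ≠ 0) (hodd : Odd (∑ i, b i))
    (hgcd : Finset.univ.gcd b = 1) {B : Matrix κ ι ℤ} (hB : GeneratesOrthogonal b B)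
    {v : SL2Z → ℂ} (hv : IsEtaMultiplier (3 * Fintype.card κ) v) :
    (∃ (τ : ℂ) (w : ι → ℂ), 0 < τ.im ∧ thetaPullback B τ w ≠ 0) ∧
    ∃ g : ℚ × (ι → ℚ) → ℂ,
      IsJacobiForm (Bᵀ * B) ((Fintype.card κ : ℚ) / 2) 1 v (fun _ _ => 1) g (thetaPullback B) ∧
      (∀ p, g p ≠ 0 →
        1 / (4 * ∑ i, (b i : ℚ) ^ 2) ≤ 2 * p.1 - bilinQ (Bᵀ * B) p.2 p.2) ∧
      (∃ p, g p ≠ 0 ∧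
        2 * p.1 - bilinQ (Bᵀ * B) p.2 p.2 = 1 / (4 * ∑ i, (b i : ℚ) ^ 2)) := by
  obtain ⟨w, hw⟩ := exists_thetaPullback_ne_zero (hB.exists_mulVec_ne_zero h2) one_pos
  exact ⟨⟨_, w, by simp, hw⟩, thetaPullbackCoeff B,
    isJacobiForm_thetaPullback hB.even_sum_mulVec hv,
    fun _ => hB.one_div_le_of_thetaPullbackCoeff_ne_zero hodd,
    hB.exists_thetaPullbackCoeff_ne_zero h2 hodd hgcd⟩

/-- Let `v = 2(b₁,…,b_m) ∈ D_m` with at least two nonzero `bᵢ`, odd sum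
and coprime entries, and let `M = v^⊥ ∩ D_m` with `ℤ`-basis the columns of `B`. Then
the pullback of `θ_{D_m} = θ(τ,z₁)⋯θ(τ,z_m)` to `M ⊗ ℂ` is a nonzero holomorphic Jacobi
cusp form of weight `m/2` and index `1` for `M` with multiplier system `v_η^{3m}`, of order
exactly `1/(v,v) = 1/(4(b₁²+⋯+b_m²))`. -/
theorem statement13 (m : ℕ) (hm : 2 ≤ m) (b : Fin m → ℤ)
    (h2 : ∃ i j : Fin m, i ≠ j ∧ b i ≠ 0 ∧ b j ≠ 0)
    (hodd : Odd (∑ i, b i))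
    (hgcd : Finset.univ.gcd b = 1)
    (B : Matrix (Fin m) (Fin (m - 1)) ℤ)
    (hinj : Function.Injective fun w : Fin (m - 1) → ℤ => B.mulVec w)
    (hspan : Set.range (fun w : Fin (m - 1) → ℤ => B.mulVec w)
      = {x : Fin m → ℤ | (2 : ℤ) ∣ ∑ i, x i ∧ ∑ i, x i * (2 * b i) = 0})
    (vη : SL2Z → ℂ)
    (hvη : ∀ A : SL2Z, ∀ τ : ℂ, 0 < τ.im →
      dedekindEta (((A.1 0 0 : ℂ) * τ + (A.1 0 1 : ℂ))
            / ((A.1 1 0 : ℂ) * τ + (A.1 1 1 : ℂ))) ^ (3 * m)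
        = vη A * ((A.1 1 0 : ℂ) * τ + (A.1 1 1 : ℂ)) ^ (((3 * m : ℕ) : ℂ) / 2)
          * dedekindEta τ ^ (3 * m)) :
    (∃ (τ : ℂ) (w : Fin (m - 1) → ℂ), 0 < τ.im ∧
      (∏ i, jtheta τ ((B.map (Int.cast : ℤ → ℂ)).mulVec w i)) ≠ 0) ∧
    ∃ g : ℚ × (Fin (m - 1) → ℚ) → ℂ,
      IsJacobiForm (B.transpose * B) ((m : ℚ) / 2) 1 vη (fun _ _ => 1) g
        (fun τ w => ∏ i, jtheta τ ((B.map (Int.cast : ℤ → ℂ)).mulVec w i)) ∧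
      (∀ p, g p ≠ 0 →
        1 / (4 * ∑ i, (b i : ℚ) ^ 2) ≤ 2 * p.1 - bilinQ (B.transpose * B) p.2 p.2) ∧
      (∃ p, g p ≠ 0 ∧
        2 * p.1 - bilinQ (B.transpose * B) p.2 p.2 = 1 / (4 * ∑ i, (b i : ℚ) ^ 2)) := by
  have h := statement13_general h2 hodd hgcd hspan (v := vη) (by rwa [Fintype.card_fin])
  rw [Fintype.card_fin] at h
  exact h
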